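/- Let B = (G, P, ι) be an acyclic generalized Bayesian network. Then every d-separation triple of the closure graph Close(G) is an independence of the standard BN semantics of B: d-sep(Close(G)) ⊆ Indep(dist_BN(B)). -/

import Mathlib

open Filter
open scoped Classical

noncomputable section

namespace GBNPaper

variable {V : Type} [Fintype V] [DecidableEq V]

/-- A distribution over a finite type: nonnegative values summing to one. -/
def IsDist {α : Type} [Fintype α] (μ : α → ℝ) : Prop :=
  (∀ a, 0 ≤ μ a) ∧ ∑ a, μ a = 1

/-- The set of parents of a node `X` w.r.t. an edge set `E`. -/
def Pre (E : Finset (V × V)) (X : V) : Finset V :=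
  (E.filter fun e => e.2 = X).image Prod.fst

/-- The set of initial (parentless) nodes. -/
def InitSet (E : Finset (V × V)) : Finset V :=
  Finset.univ.filter fun X => Pre E X = ∅

/-- Assignments over a subset `U` of the nodes. -/
abbrev Asg (U : Finset V) : Type := {x // x ∈ U} → Bool

/-- A full assignment `b` agrees with a partial assignment `d` on `U`. -/
abbrev Agrees (b : V → Bool) (U : Finset V) (d : Asg U) : Prop :=
  ∀ x : {x // x ∈ U}, b x.1 = d x

/-- A generalized Bayesian network over node set `V`. -/
structure GBN (V : Type) [Fintype V] [DecidableEq V] where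
  /-- the directed edges -/
  edges : Finset (V × V)
  /-- CPT entries: the probability of `X = T` given an assignment of the parents of `X` -/
  cpt : (X : V) → Asg (Pre edges X) → ℝ
  cpt_nonneg : ∀ X b, 0 ≤ cpt X b
  cpt_le_one : ∀ X b, cpt X b ≤ 1
  /-- the initial distribution over assignments of the initial nodes -/
  ι : Asg (InitSet edges) → ℝ
  ι_dist : IsDist ι

/-- Probability of an event (set of full assignments) under `μ`. -/
def probIf (μ : (V → Bool) → ℝ) (p : (V → Bool) → Prop) : ℝ :=
  ∑ b : V → Bool, if p b then μ b else 0

/-- The marginal distribution of `μ` on `U`. -/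
def marginal (μ : (V → Bool) → ℝ) (U : Finset V) : Asg U → ℝ :=
  fun d => probIf μ fun b => Agrees b U d

/-- `Pr(X = v | parents as given by b)`. -/
def copyProb (B : GBN V) (X : V) (v : Bool) (b : V → Bool) : ℝ :=
  if v then B.cpt X (fun p => b p.1) else 1 - B.cpt X (fun p => b p.1)

/-- The standard BN semantics (chain rule) of a GBN. -/
def distBN (B : GBN V) (b : V → Bool) : ℝ :=
  B.ι (fun x => b x.1) *
    ∏ X ∈ Finset.univ \ InitSet B.edges, copyProb B X (b X) b

/-- The edge set contains no directed cycle. -/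
def Acyclic (E : Finset (V × V)) : Prop :=
  ∀ x : V, ¬ Relation.TransGen (fun a b => (a, b) ∈ E) x x

/-- `C` is a cutset: every directed cycle contains a node of `C`. -/
def IsCutset (E : Finset (V × V)) (C : Finset V) : Prop :=
  ∀ x : V, ¬ Relation.TransGen (fun a b => (a, b) ∈ E ∧ a ∉ C ∧ b ∉ C) x x

/-- The standard BN semantics of the `C`-dissected GBN `B↑C↑γ`, as a joint
distribution over assignments of the original nodes `V` together with
assignments of the copies `C'` of the cutset nodes. -/
def distDissect (B : GBN V) (C : Finset V) (γ : Asg C → ℝ)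
    (b : V → Bool) (c : Asg C) : ℝ :=
  B.ι (fun x => b x.1) * γ (fun x => b x.1) *
    (∏ X ∈ (Finset.univ \ InitSet B.edges) \ C, copyProb B X (b X) b) *
    ∏ Y ∈ C.attach, copyProb B Y.1 (c Y) b

/-- `Next(B,C,γ)`: restrict `dist_BN(B↑C↑γ)` to `(V∖C) ∪ C'` and re-identify
the copies with the original cutset nodes. -/
def Next (B : GBN V) (C : Finset V) (γ : Asg C → ℝ) (a : V → Bool) : ℝ :=
  ∑ b : V → Bool,
    if ∀ x : V, x ∉ C → b x = a x then distDissect B C γ b (fun y => a y.1) else 0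

/-- `Extend(B,C,γ) = dist_BN(B↑C↑γ)|_V`. -/
def Extend (B : GBN V) (C : Finset V) (γ : Asg C → ℝ) (a : V → Bool) : ℝ :=
  ∑ c : Asg C, distDissect B C γ a c

/-- Dirac (point) distribution. -/
def DiracD {α : Type} [DecidableEq α] (b : α) : α → ℝ := fun c => if c = b then 1 else 0

/-- Transition matrix of the cutset Markov chain `M_{B↑C}`:
`P(b,c) = Next(B,C,Dirac(b))|_C (c)`. -/
def cutsetP (B : GBN V) (C : Finset V) (b c : Asg C) : ℝ :=
  marginal (Next B C (DiracD b)) C c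

/-- Vector-matrix multiplication `γ·P`. -/
def vecMul {α : Type} [Fintype α] (γ : α → ℝ) (P : α → α → ℝ) : α → ℝ :=
  fun c => ∑ b, γ b * P b c

/-- The transient distributions `γ0·P^n`. -/
def matIter {α : Type} [Fintype α] (P : α → α → ℝ) (γ0 : α → ℝ) : ℕ → (α → ℝ)
  | 0 => γ0
  | n + 1 => vecMul (matIter P γ0 n) P

/-- The sequence `γ_{n+1} = Next(B,C,γ_n)|_C`. -/
def nextSeq (B : GBN V) (C : Finset V) (γ0 : Asg C → ℝ) : ℕ → (Asg C → ℝ)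
  | 0 => γ0
  | n + 1 => marginal (Next B C (nextSeq B C γ0 n)) C

/-- Cesàro averages of a sequence of vectors. -/
def cesaro {α : Type} (f : ℕ → α → ℝ) (n : ℕ) : α → ℝ :=
  fun a => (∑ i ∈ Finset.range (n + 1), f i a) / (n + 1)

/-- The Markov chain semantics `[B]_{MC-C}`: image of
`γ0 ↦ Extend(B,C,lrf^{γ0})` over all initial cutset distributions `γ0`,
where `lrf^{γ0}` is the Cesàro limit of the transient distributions. -/
def MCSem (B : GBN V) (C : Finset V) : Set ((V → Bool) → ℝ) :=
  { μ | ∃ γ0 γ, IsDist γ0 ∧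
      Tendsto (cesaro (matIter (cutsetP B C) γ0)) atTop (nhds γ) ∧
      μ = Extend B C γ }

/-- The limit semantics `[B]_{Lim-C}`. -/
def LimSem (B : GBN V) (C : Finset V) : Set ((V → Bool) → ℝ) :=
  { μ | ∃ γ0 γ, IsDist γ0 ∧
      Tendsto (nextSeq B C γ0) atTop (nhds γ) ∧
      μ = Extend B C γ }

/-- The limit average semantics `[B]_{LimAvg-C}`. -/
def LimAvgSem (B : GBN V) (C : Finset V) : Set ((V → Bool) → ℝ) :=
  { μ | ∃ γ0 γ, IsDist γ0 ∧
      Tendsto (cesaro (nextSeq B C γ0)) atTop (nhds γ) ∧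
      μ = Extend B C γ }

/-- The Markov chain semantics in stationary-distribution form:
`{ Extend(B,C,γ) : γ a distribution with γ = γ·P }`. -/
def MCStatSem (B : GBN V) (C : Finset V) : Set ((V → Bool) → ℝ) :=
  { μ | ∃ γ : Asg C → ℝ, IsDist γ ∧ γ = vecMul γ (cutsetP B C) ∧ μ = Extend B C γ }

/-- Strong CPT-consistency of `μ` for node `X`. -/
def StrongCPT (B : GBN V) (μ : (V → Bool) → ℝ) (X : V) : Prop :=
  ∀ c : Asg (Pre B.edges X),
    probIf μ (fun f => f X = true ∧ Agrees f (Pre B.edges X) c) =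
      probIf μ (fun f => Agrees f (Pre B.edges X) c) * B.cpt X c

/-- Weak CPT-consistency of `μ` for node `X`. -/
def WeakCPT (B : GBN V) (μ : (V → Bool) → ℝ) (X : V) : Prop :=
  probIf μ (fun f => f X = true) =
    ∑ c : Asg (Pre B.edges X),
      probIf μ (fun f => Agrees f (Pre B.edges X) c) * B.cpt X c

/-- The CPT semantics `[B]_{Cpt}`. -/
def CptSem (B : GBN V) : Set ((V → Bool) → ℝ) :=
  { μ | IsDist μ ∧ marginal μ (InitSet B.edges) = B.ι ∧
      ∀ X, X ∉ InitSet B.edges → StrongCPT B μ X }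

/-- `(X ⊥ Y | Z) ∈ Indep(μ)`. -/
def IndepTriple (μ : (V → Bool) → ℝ) (X Y Z : Finset V) : Prop :=
  ∀ (a : Asg X) (b : Asg Y) (c : Asg Z),
    probIf μ (fun f => Agrees f Y b ∧ Agrees f Z c) = 0 ∨
    probIf μ (fun f => Agrees f X a ∧ Agrees f Y b ∧ Agrees f Z c) /
        probIf μ (fun f => Agrees f Y b ∧ Agrees f Z c) =
      probIf μ (fun f => Agrees f X a ∧ Agrees f Z c) /
        probIf μ (fun f => Agrees f Z c)

def PairwiseDisjoint3 (X Y Z : Finset V) : Prop :=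
  Disjoint X Y ∧ Disjoint X Z ∧ Disjoint Y Z

/-- `Indep(μ)` as a set of triples. -/
def IndepSet (μ : (V → Bool) → ℝ) : Set (Finset V × Finset V × Finset V) :=
  { t | PairwiseDisjoint3 t.1 t.2.1 t.2.2 ∧ IndepTriple μ t.1 t.2.1 t.2.2 }

/-- The CPT-I semantics `[B]_{Cpt-I}`. -/
def CptISem (B : GBN V) (I : Set (Finset V × Finset V × Finset V)) :
    Set ((V → Bool) → ℝ) :=
  { μ | μ ∈ CptSem B ∧ I ⊆ IndepSet μ }

/-! d-separation -/

def Adjacent (E : Finset (V × V)) (x y : V) : Prop := (x, y) ∈ E ∨ (y, x) ∈ E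

/-- Reachability along directed edges (including the node itself). -/
def Reaches (E : Finset (V × V)) (x y : V) : Prop :=
  Relation.ReflTransGen (fun a b => (a, b) ∈ E) x y

/-- An intermediate triple `a, w, b` on a path blocks it given `Z`:
either `w ∈ Z` and `w` lies in a chain or a fork, or `w` lies in a collider
and no node reachable from `w` (including `w`) is in `Z`. -/
def BlockedTriple (E : Finset (V × V)) (Z : Finset V) (a w b : V) : Prop :=
  (w ∈ Z ∧ (((a, w) ∈ E ∧ (w, b) ∈ E) ∨ ((b, w) ∈ E ∧ (w, a) ∈ E) ∨
      ((w, a) ∈ E ∧ (w, b) ∈ E))) ∨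
  ((a, w) ∈ E ∧ (b, w) ∈ E ∧ ∀ d, Reaches E w d → d ∉ Z)

/-- A path (as a list of nodes) is blocked given `Z`. -/
def Blocked (E : Finset (V × V)) (Z : Finset V) (W : List V) : Prop :=
  ∃ l₁ a w b l₂, W = l₁ ++ a :: w :: b :: l₂ ∧ BlockedTriple E Z a w b

/-- `x` and `y` are d-separated given `Z`: every undirected simple path
from `x` to `y` is blocked given `Z`. -/
def DSepNodes (E : Finset (V × V)) (x y : V) (Z : Finset V) : Prop :=
  ∀ W : List V, W.Chain' (Adjacent E) → W.Nodup →
    W.head? = some x → W.getLast? = some y → Blocked E Z W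

def DSep (E : Finset (V × V)) (X Y Z : Finset V) : Prop :=
  ∀ x ∈ X, ∀ y ∈ Y, DSepNodes E x y Z

/-- `d-sep(G)` as a set of triples of pairwise disjoint node sets. -/
def DSepSet (E : Finset (V × V)) : Set (Finset V × Finset V × Finset V) :=
  { t | PairwiseDisjoint3 t.1 t.2.1 t.2.2 ∧ DSep E t.1 t.2.1 t.2.2 }

/-- `Close(G)`: add an edge between every ordered pair of distinct initial nodes. -/
def Close (E : Finset (V × V)) : Finset (V × V) :=
  E ∪ ((InitSet E ×ˢ InitSet E).filter fun p => p.1 ≠ p.2)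

/-- `G[C]`: remove all edges into nodes of `C` (so the nodes of `C` are initial). -/
def CutGraph (E : Finset (V × V)) (C : Finset V) : Finset (V × V) :=
  E.filter fun e => e.2 ∉ C

/-- `ι` is a product distribution: it factorizes into its single-node marginals,
i.e. the initial nodes are mutually independent under `ι`. -/
def IsProductDist {U : Finset V} (ι : Asg U → ℝ) : Prop :=
  ∀ b : Asg U,
    ι b = ∏ x : {x // x ∈ U}, ∑ b' : Asg U, if b' x = b x then ι b' else 0

/-! Markov chain notions -/

/-- Reachability in the underlying graph of a DTMC. -/
def MCReach {α : Type} (P : α → α → ℝ) (x y : α) : Prop :=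
  Relation.ReflTransGen (fun a b => 0 < P a b) x y

/-- Bottom strongly connected component of a DTMC: nonempty, closed under
reachability, and strongly connected. -/
def IsBSCC {α : Type} (P : α → α → ℝ) (D : Set α) : Prop :=
  D.Nonempty ∧ (∀ x ∈ D, ∀ y, MCReach P x y → y ∈ D) ∧
    ∀ x ∈ D, ∀ y ∈ D, MCReach P x y

/-- Walks of a given length along positive-probability transitions. -/
def walkLen {α : Type} (P : α → α → ℝ) : ℕ → α → α → Prop
  | 0, x, y => x = y
  | n + 1, x, y => ∃ z, 0 < P x z ∧ walkLen P n z y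

/-- The lengths of the cycles of `D`. -/
def CycleLens {α : Type} (P : α → α → ℝ) (D : Set α) : Set ℕ :=
  { n | 0 < n ∧ ∃ x ∈ D, walkLen P n x x }

/-- `D` is aperiodic: the gcd of the lengths of its cycles equals 1. -/
def AperiodicBSCC {α : Type} (P : α → α → ℝ) (D : Set α) : Prop :=
  ∀ d : ℕ, (∀ n ∈ CycleLens P D, d ∣ n) → d = 1

/-- `D` is periodic: the gcd of the lengths of its cycles is greater than 1. -/
def PeriodicBSCC {α : Type} (P : α → α → ℝ) (D : Set α) : Prop :=
  ∃ d : ℕ, 1 < d ∧ ∀ n ∈ CycleLens P D, d ∣ n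

/-- A GBN is smooth if all CPT entries and all values of `ι` lie in `(0,1)`. -/
def Smooth (B : GBN V) : Prop :=
  (∀ X b, B.cpt X b ∈ Set.Ioo (0 : ℝ) 1) ∧ ∀ d, B.ι d ∈ Set.Ioo (0 : ℝ) 1

set_option linter.unusedSectionVars false

/-! Elementary facts on the graph and its closure -/

theorem mem_Pre {E : Finset (V × V)} {X p : V} : p ∈ Pre E X ↔ (p, X) ∈ E := by
  simp [Pre]

theorem mem_InitSet {E : Finset (V × V)} {X : V} : X ∈ InitSet E ↔ ∀ p, (p, X) ∉ E := by
  simp [InitSet, Finset.eq_empty_iff_forall_notMem, mem_Pre]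

theorem not_mem_InitSet_of_edge {E : Finset (V × V)} {p X : V} (h : (p, X) ∈ E) :
    X ∉ InitSet E := fun hX => mem_InitSet.1 hX p h

theorem mem_Close {E : Finset (V × V)} {a b : V} :
    (a, b) ∈ Close E ↔ (a, b) ∈ E ∨ (a ∈ InitSet E ∧ b ∈ InitSet E ∧ a ≠ b) := by
  simp [Close, and_assoc]

theorem Acyclic.asymm {E : Finset (V × V)} (h : Acyclic E) {a b : V} (hab : (a, b) ∈ E) :
    (b, a) ∉ E := fun hba => h a ((Relation.TransGen.single hab).tail hba)

theorem Reaches.mono {E F : Finset (V × V)} (hEF : E ⊆ F) {a b : V} (h : Reaches E a b) :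
    Reaches F a b := Relation.ReflTransGen.mono (fun _ _ hab => hEF hab) _ _ h

theorem subset_Close (E : Finset (V × V)) : E ⊆ Close E := Finset.subset_union_left

/-- A nonempty set of nodes of an acyclic graph has an element without children in the set. -/
theorem Acyclic.exists_sink {E : Finset (V × V)} (h : Acyclic E) (s : Set V) (hs : s.Nonempty) :
    ∃ v ∈ s, ∀ w ∈ s, (v, w) ∉ E := by
  let r : V → V → Prop := fun a b => Relation.TransGen (fun a b => (a, b) ∈ E) b a
  have : IsTrans V r := ⟨fun a b c hab hbc => Relation.TransGen.trans hbc hab⟩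
  have : Std.Irrefl r := ⟨fun a => h a⟩
  obtain ⟨v, hv, hmin⟩ := (Finite.wellFounded_of_trans_of_irrefl r).has_min s hs
  exact ⟨v, hv, fun w hw hvw => hmin w hw (Relation.TransGen.single hvw)⟩

/-! Open walks in the closure -/

/-- A consecutive triple `a, w, b` of a walk in the closure that is open given `Z`; triples of
initial nodes count as non-colliders. -/
def OpenTriple (E : Finset (V × V)) (Z : Finset V) (a w b : V) : Prop :=
  (w ∉ Z ∧ ((w, a) ∈ E ∨ (w, b) ∈ E ∨
      (a ∈ InitSet E ∧ w ∈ InitSet E ∧ b ∈ InitSet E))) ∨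
  ((a, w) ∈ E ∧ (b, w) ∈ E ∧ ∃ d ∈ Z, Reaches E w d)

/-- A walk `p 0, …, p n` in the closure all of whose triples are open given `Z`. -/
structure OpenWalk (E : Finset (V × V)) (Z : Finset V) (p : ℕ → V) (n : ℕ) : Prop where
  adj : ∀ k < n, Adjacent (Close E) (p k) (p (k + 1))
  triple : ∀ k, k + 2 ≤ n → OpenTriple E Z (p k) (p (k + 1)) (p (k + 2))

theorem OpenTriple.not_blocked {E : Finset (V × V)} (hE : Acyclic E) {Z : Finset V} {a w b : V}
    (h : OpenTriple E Z a w b) (hInit : ¬ (a ∈ InitSet E ∧ w ∈ InitSet E ∧ b ∈ InitSet E)) :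
    ¬ BlockedTriple (Close E) Z a w b := by
  have close_asymm : ∀ {u v : V}, (u, v) ∈ E → (v, u) ∉ Close E := by
    intro u v huv hvu
    rcases mem_Close.1 hvu with h1 | ⟨h1, -, -⟩
    · exact hE.asymm huv h1
    · exact not_mem_InitSet_of_edge huv h1
  unfold BlockedTriple
  rcases h with ⟨hw, h | h | h⟩ | ⟨ha, hb, d, hd, hr⟩
  · have := close_asymm h
    tauto
  · have := close_asymm h
    tauto
  · exact absurd h hInit
  · have h1 := close_asymm ha
    have h2 := close_asymm hb
    have h3 := hr.mono (subset_Close E)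
    rintro (h | ⟨-, -, h⟩)
    · tauto
    · exact h d h3 hd

/-- Following a walk from an outgoing edge leads along directed edges up to the first collider. -/
theorem OpenWalk.reaches_or_edge {E : Finset (V × V)} (hE : Acyclic E) {Z : Finset V}
    {p : ℕ → V} {n : ℕ} (hp : OpenWalk E Z p n) {i : ℕ} (hi : (p i, p (i + 1)) ∈ E) (m : ℕ)
    (hm : i + m + 1 ≤ n) :
    (∃ d ∈ Z, Reaches E (p i) d) ∨
      (Reaches E (p i) (p (i + m)) ∧ (p (i + m), p (i + m + 1)) ∈ E) := by
  induction m with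
  | zero => exact Or.inr ⟨Relation.ReflTransGen.refl, hi⟩
  | succ m ih =>
    rcases ih (by omega) with h | ⟨hr, he⟩
    · exact Or.inl h
    · have hr' : Reaches E (p i) (p (i + m + 1)) := hr.tail he
      rcases hp.triple (i + m) (by omega) with ⟨-, h | h | h⟩ | ⟨-, -, d, hd, hd'⟩
      · exact absurd h (hE.asymm he)
      · exact Or.inr ⟨hr', h⟩
      · exact absurd h.2.1 (not_mem_InitSet_of_edge he)
      · exact Or.inl ⟨d, hd, hr'.trans hd'⟩

theorem OpenWalk.openTriple_splice {E : Finset (V × V)} (hE : Acyclic E) {Z : Finset V}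
    {p : ℕ → V} {n : ℕ} (hp : OpenWalk E Z p n) {i m : ℕ} (hm : i + 1 + m + 2 ≤ n)
    (heq : p (i + 1) = p (i + 1 + m + 1)) :
    OpenTriple E Z (p i) (p (i + 1)) (p (i + 1 + m + 2)) := by
  have h1 := hp.triple i (by omega)
  have h2 := hp.triple (i + 1 + m) hm
  have a1 := hp.adj i (by omega)
  have a2 := hp.adj (i + 1 + m + 1) (by omega)
  have hfollow := fun h => hp.reaches_or_edge hE (i := i + 1) h m (by omega)
  rw [← heq] at h2 a2 hfollow
  change Adjacent (Close E) (p (i + 1)) (p (i + 1 + m + 2)) at a2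
  generalize p (i + 1 + m + 2) = b at *
  generalize p (i + 1) = w at *
  generalize p i = a at *
  change OpenTriple E Z a w (p (i + 1 + 1)) at h1
  by_cases hwa : (w, a) ∈ E
  · refine Or.inl ⟨?_, Or.inl hwa⟩
    rcases h1 with h1 | h1
    · exact h1.1
    · exact absurd h1.1 (hE.asymm hwa)
  by_cases hwb : (w, b) ∈ E
  · refine Or.inl ⟨?_, Or.inr (Or.inl hwb)⟩
    rcases h2 with h2 | h2
    · exact h2.1
    · exact absurd h2.2.1 (hE.asymm hwb)
  have haw : (a, w) ∈ E ∨ (a ∈ InitSet E ∧ w ∈ InitSet E) := by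
    rcases a1 with h | h <;> rcases mem_Close.1 h with h | h <;> tauto
  have hbw : (b, w) ∈ E ∨ (b ∈ InitSet E ∧ w ∈ InitSet E) := by
    rcases a2 with h | h <;> rcases mem_Close.1 h with h | h <;> tauto
  by_cases hw : w ∈ InitSet E
  · have hno : ∀ u, (u, w) ∉ E := mem_InitSet.1 hw
    refine Or.inl ⟨?_, Or.inr (Or.inr ⟨?_, hw, ?_⟩)⟩
    · rcases h1 with h1 | h1
      · exact h1.1
      · exact absurd h1.1 (hno _)
    · exact (haw.resolve_left (hno _)).1
    · exact (hbw.resolve_left (hno _)).1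
  have haw' : (a, w) ∈ E := haw.resolve_right fun h => hw h.2
  have hbw' : (b, w) ∈ E := hbw.resolve_right fun h => hw h.2
  refine Or.inr ⟨haw', hbw', ?_⟩
  rcases h1 with ⟨-, h1⟩ | h1
  · rcases h2 with ⟨-, h2⟩ | h2
    · rcases hfollow (by tauto) with h | ⟨-, h⟩
      · exact h
      · exact absurd h (hE.asymm (by tauto))
    · exact h2.2.2
  · exact h1.2.2

/-- Cutting out the part of a walk between two visits of the same node. -/
theorem OpenWalk.splice {E : Finset (V × V)} (hE : Acyclic E) {Z : Finset V}
    {p : ℕ → V} {n : ℕ} (hp : OpenWalk E Z p n) {i m : ℕ} (hm : i + m + 1 ≤ n)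
    (heq : p i = p (i + m + 1)) :
    OpenWalk E Z (fun k => if k ≤ i then p k else p (k + m + 1)) (n - (m + 1)) := by
  have hval : ∀ k, i ≤ k → (if k ≤ i then p k else p (k + m + 1)) = p (k + m + 1) := by
    intro k hk
    split_ifs with h
    · obtain rfl : k = i := by omega
      exact heq
    · rfl
  constructor
  · intro k hk
    by_cases hki : i ≤ k
    · simp only [hval k hki, hval (k + 1) (by omega)]
      have := hp.adj (k + m + 1) (by omega)
      rwa [show k + m + 1 + 1 = k + 1 + m + 1 by omega] at this
    · simp only [if_pos (show k ≤ i by omega), if_pos (show k + 1 ≤ i by omega)]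
      exact hp.adj k (by omega)
  · intro k hk
    by_cases hki : i ≤ k
    · simp only [hval k hki, hval (k + 1) (by omega), hval (k + 2) (by omega)]
      have := hp.triple (k + m + 1) (by omega)
      rwa [show k + m + 1 + 1 = k + 1 + m + 1 by omega,
        show k + m + 1 + 2 = k + 2 + m + 1 by omega] at this
    · by_cases hki' : k + 1 = i
      · subst hki'
        simp only [if_pos (show k ≤ k + 1 by omega), le_refl, if_true,
          if_neg (show ¬ k + 2 ≤ k + 1 by omega)]
        have := hp.openTriple_splice hE (i := k) (m := m) (by omega) heq
        rwa [show k + 1 + m + 2 = k + 2 + m + 1 by omega] at this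
      · simp only [if_pos (show k ≤ i by omega), if_pos (show k + 1 ≤ i by omega),
          if_pos (show k + 2 ≤ i by omega)]
        exact hp.triple k (by omega)

/-- Replacing three consecutive initial nodes of a walk by the outer two. -/
theorem OpenWalk.shortcut {E : Finset (V × V)} {Z : Finset V}
    {p : ℕ → V} {n : ℕ} (hp : OpenWalk E Z p n) {i : ℕ} (hi : i + 2 ≤ n)
    (h0 : p i ∈ InitSet E) (h1 : p (i + 1) ∈ InitSet E) (h2 : p (i + 2) ∈ InitSet E)
    (hne : p i ≠ p (i + 2)) :
    OpenWalk E Z (fun k => if k ≤ i then p k else p (k + 1)) (n - 1) := by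
  have hno : ∀ {u w : V}, w ∈ InitSet E → (u, w) ∉ E := fun hw => mem_InitSet.1 hw _
  constructor
  · intro k hk
    rcases lt_trichotomy k i with h | h | h
    · simp only [if_pos (show k ≤ i by omega), if_pos (show k + 1 ≤ i by omega)]
      exact hp.adj k (by omega)
    · subst h
      simp only [le_refl, if_true, if_neg (show ¬ k + 1 ≤ k by omega)]
      exact Or.inl (mem_Close.2 (Or.inr ⟨h0, h2, hne⟩))
    · simp only [if_neg (show ¬ k ≤ i by omega), if_neg (show ¬ k + 1 ≤ i by omega)]
      exact hp.adj (k + 1) (by omega)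
  · intro k hk
    by_cases hki : i < k
    · simp only [if_neg (show ¬ k ≤ i by omega), if_neg (show ¬ k + 1 ≤ i by omega),
        if_neg (show ¬ k + 2 ≤ i by omega)]
      exact hp.triple (k + 1) (by omega)
    by_cases hki : k = i
    · subst hki
      simp only [le_refl, if_true, if_neg (show ¬ k + 1 ≤ k by omega),
        if_neg (show ¬ k + 2 ≤ k by omega)]
      rcases hp.triple (k + 1) (by omega) with ⟨hz, h | h | h⟩ | h
      · exact absurd h (hno h1)
      · exact Or.inl ⟨hz, Or.inr (Or.inl h)⟩
      · exact Or.inl ⟨hz, Or.inr (Or.inr ⟨h0, h2, h.2.2⟩)⟩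
      · exact absurd h.1 (hno h2)
    by_cases hki : k + 1 = i
    · subst hki
      simp only [if_pos (show k ≤ k + 1 by omega), le_refl, if_true,
        if_neg (show ¬ k + 2 ≤ k + 1 by omega)]
      rcases hp.triple k (by omega) with ⟨hz, h | h | h⟩ | h
      · exact Or.inl ⟨hz, Or.inl h⟩
      · exact absurd h (hno h1)
      · exact Or.inl ⟨hz, Or.inr (Or.inr ⟨h.1, h0, h2⟩)⟩
      · exact absurd h.1 (hno h0)
    · simp only [if_pos (show k ≤ i by omega), if_pos (show k + 1 ≤ i by omega),
        if_pos (show k + 2 ≤ i by omega)]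
      exact hp.triple k (by omega)

/-- The endpoints of an open walk are not d-separated in the closure. -/
theorem OpenWalk.not_dSepNodes {E : Finset (V × V)} (hE : Acyclic E) {Z : Finset V}
    {p : ℕ → V} {n : ℕ} (hp : OpenWalk E Z p n) : ¬ DSepNodes (Close E) (p 0) (p n) Z := by
  induction n using Nat.strong_induction_on generalizing p with
  | _ n ih =>
    by_cases hinj : ∃ i m, i + m + 1 ≤ n ∧ p i = p (i + m + 1)
    · obtain ⟨i, m, hm, heq⟩ := hinj
      have := ih (n - (m + 1)) (by omega) (hp.splice hE hm heq)
      simp only [zero_le, if_true] at this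
      convert this using 2
      split_ifs with h
      · rw [show n = i + m + 1 by omega, ← heq]
        congr 1
        omega
      · congr 1
        omega
    by_cases hin : ∃ i, i + 2 ≤ n ∧ p i ∈ InitSet E ∧ p (i + 1) ∈ InitSet E ∧
        p (i + 2) ∈ InitSet E
    · obtain ⟨i, hi, h0, h1, h2⟩ := hin
      have := ih (n - 1) (by omega)
        (hp.shortcut hi h0 h1 h2 fun h => hinj ⟨i, 1, by omega, h⟩)
      simp only [zero_le, if_true] at this
      rwa [if_neg (by omega), show n - 1 + 1 = n by omega] at this
    intro hsep
    have hne : ∀ i j, i < j → j ≤ n → p i ≠ p j := fun i j hij hj h =>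
      hinj ⟨i, j - i - 1, by omega, by rwa [show i + (j - i - 1) + 1 = j by omega]⟩
    obtain ⟨l₁, a, w, b, l₂, hW, hblock⟩ := hsep ((List.range (n + 1)).map p)
      (by
        refine List.isChain_iff_getElem.2 fun i hi => ?_
        simp only [List.length_map, List.length_range] at hi
        simpa using hp.adj i (by omega))
      (by
        rw [List.nodup_map_iff_inj_on List.nodup_range]
        intro i hi j hj hij
        rw [List.mem_range] at hi hj
        by_contra hc
        rcases lt_or_gt_of_ne hc with h | h
        · exact hne i j h (by omega) hij
        · exact hne j i h (by omega) hij.symm)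
      (by simp [List.range_succ_eq_map])
      (by simp [List.range_succ])
    have hlen := congrArg List.length hW
    simp only [List.length_map, List.length_range, List.length_append, List.length_cons] at hlen
    have hget : ∀ k, k ≤ n → (l₁ ++ a :: w :: b :: l₂)[k]? = some (p k) := by
      intro k hk
      rw [← hW]
      simp [List.getElem?_range (show k < n + 1 by omega)]
    have ha := hget l₁.length (by omega)
    have hw := hget (l₁.length + 1) (by omega)
    have hb := hget (l₁.length + 2) (by omega)
    simp at ha hw hb
    subst ha hw hb
    exact (hp.triple l₁.length (by omega)).not_blocked hE
      (fun h => hin ⟨l₁.length, by omega, h⟩) hblock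

/-! Nodes connected to a node set by open walks -/

/-- `Connected E X Z true v` (`Connected E X Z false v`): some open walk in the closure given `Z`
leads from `X` to `v` and ends with an edge into `v` (is trivial or ends with an edge out of `v`). -/
inductive Connected (E : Finset (V × V)) (X Z : Finset V) : Bool → V → Prop
  | start {x : V} : x ∈ X → Connected E X Z false x
  | out_parent {v u : V} : Connected E X Z false v → (u, v) ∈ E → u ∉ Z → Connected E X Z false u
  | out_child {v c : V} : Connected E X Z false v → (v, c) ∈ E → Connected E X Z true c
  | in_child {v c : V} : Connected E X Z true v → v ∉ Z → (v, c) ∈ E → Connected E X Z true c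
  | in_parent {v u d : V} : Connected E X Z true v → Reaches E v d → d ∈ Z → (u, v) ∈ E →
      u ∉ Z → Connected E X Z false u
  | root {v u : V} : Connected E X Z false v → v ∈ InitSet E → u ∈ InitSet E → v ≠ u →
      Connected E X Z true u

theorem Connected.not_mem {E : Finset (V × V)} {X Z : Finset V} (hXZ : Disjoint X Z) {v : V}
    (h : Connected E X Z false v) : v ∉ Z := by
  cases h with
  | start hx => exact Finset.disjoint_left.1 hXZ hx
  | out_parent _ _ h => exact h
  | in_parent _ _ _ _ h => exact h

theorem OpenWalk.extend {E : Finset (V × V)} {Z : Finset V} {p : ℕ → V} {n : ℕ}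
    (hp : OpenWalk E Z p n) {u : V} (hadj : Adjacent (Close E) (p n) u)
    (htriple : ∀ m, n = m + 1 → OpenTriple E Z (p m) (p n) u) :
    OpenWalk E Z (Function.update p (n + 1) u) (n + 1) := by
  have hlt : ∀ k, k ≤ n → Function.update p (n + 1) u k = p k := fun k hk =>
    Function.update_of_ne (by omega) _ _
  constructor
  · intro k hk
    rw [hlt k (by omega)]
    rcases Nat.lt_succ_iff_lt_or_eq.1 hk with h | rfl
    · rw [hlt (k + 1) h]
      exact hp.adj k h
    · simpa using hadj
  · intro k hk
    rw [hlt k (by omega), hlt (k + 1) (by omega)]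
    by_cases h : k + 2 ≤ n
    · rw [hlt (k + 2) h]
      exact hp.triple k h
    · obtain rfl : n = k + 1 := by omega
      simpa using htriple k rfl

theorem Connected.exists_openWalk {E : Finset (V × V)} {X Z : Finset V} (hXZ : Disjoint X Z)
    {s : Bool} {v : V} (h : Connected E X Z s v) :
    ∃ (p : ℕ → V) (n : ℕ), p 0 ∈ X ∧ p n = v ∧ OpenWalk E Z p n ∧
      (s = false → ∀ m, n = m + 1 → (v, p m) ∈ E) ∧
      (s = true → ∀ m, n = m + 1 → (p m, v) ∈ Close E) := by
  have step : ∀ {p : ℕ → V} {n : ℕ} {u : V}, p 0 ∈ X → OpenWalk E Z p n →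
      Adjacent (Close E) (p n) u → (∀ m, n = m + 1 → OpenTriple E Z (p m) (p n) u) →
      ∃ (q : ℕ → V) (k : ℕ), q 0 ∈ X ∧ q k = u ∧ OpenWalk E Z q k ∧
        ∀ m, k = m + 1 → q m = p n := by
    intro p n u h0 hp hadj htr
    refine ⟨_, n + 1, ?_, ?_, hp.extend hadj htr, ?_⟩
    · rwa [Function.update_of_ne (by omega)]
    · simp
    · intro m hm
      obtain rfl : n = m := by omega
      exact Function.update_of_ne (by omega) _ _
  have hsub : ∀ {a b : V}, (a, b) ∈ E → (a, b) ∈ Close E := fun h => subset_Close E h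
  induction h with
  | start hx =>
    exact ⟨fun _ => _, 0, hx, rfl, ⟨by simp, by simp⟩, by simp, by simp⟩
  | @out_parent v u hv huv hu ih =>
    obtain ⟨p, n, h0, rfl, hp, hs, -⟩ := ih
    obtain ⟨q, k, hq0, rfl, hq, hlast⟩ := step h0 hp (Or.inr (hsub huv))
      fun m hm => Or.inl ⟨hv.not_mem hXZ, Or.inl (hs rfl m hm)⟩
    exact ⟨q, k, hq0, rfl, hq, fun _ m hm => by rwa [hlast m hm], by simp⟩
  | @out_child v c hv hvc ih =>
    obtain ⟨p, n, h0, rfl, hp, hs, -⟩ := ih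
    obtain ⟨q, k, hq0, rfl, hq, hlast⟩ := step h0 hp (Or.inl (hsub hvc))
      fun m hm => Or.inl ⟨hv.not_mem hXZ, Or.inl (hs rfl m hm)⟩
    exact ⟨q, k, hq0, rfl, hq, by simp, fun _ m hm => by rw [hlast m hm]; exact hsub hvc⟩
  | @in_child v c hv hvZ hvc ih =>
    obtain ⟨p, n, h0, rfl, hp, -, -⟩ := ih
    obtain ⟨q, k, hq0, rfl, hq, hlast⟩ := step h0 hp (Or.inl (hsub hvc))
      fun m hm => Or.inl ⟨hvZ, Or.inr (Or.inl hvc)⟩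
    exact ⟨q, k, hq0, rfl, hq, by simp, fun _ m hm => by rw [hlast m hm]; exact hsub hvc⟩
  | @in_parent v u d hv hvd hd huv hu ih =>
    obtain ⟨p, n, h0, rfl, hp, -, hs⟩ := ih
    obtain ⟨q, k, hq0, rfl, hq, hlast⟩ := step h0 hp (Or.inr (hsub huv)) fun m hm =>
      Or.inr ⟨(mem_Close.1 (hs rfl m hm)).resolve_right
        fun h => not_mem_InitSet_of_edge huv h.2.1, huv, d, hd, hvd⟩
    exact ⟨q, k, hq0, rfl, hq, fun _ m hm => by rwa [hlast m hm], by simp⟩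
  | @root v u hv hvI huI hne ih =>
    obtain ⟨p, n, h0, rfl, hp, hs, -⟩ := ih
    have hvu := mem_Close.2 (Or.inr ⟨hvI, huI, hne⟩)
    obtain ⟨q, k, hq0, rfl, hq, hlast⟩ := step h0 hp (Or.inl hvu)
      fun m hm => Or.inl ⟨hv.not_mem hXZ, Or.inl (hs rfl m hm)⟩
    exact ⟨q, k, hq0, rfl, hq, by simp, fun _ m hm => by rwa [hlast m hm]⟩

theorem Connected.not_mem_of_dSep {E : Finset (V × V)} (hE : Acyclic E) {X Y Z : Finset V}
    (hXZ : Disjoint X Z) (hsep : DSep (Close E) X Y Z) {s : Bool} {v : V}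
    (h : Connected E X Z s v) : v ∉ Y := by
  intro hv
  obtain ⟨p, n, h0, rfl, hp, -⟩ := h.exists_openWalk hXZ
  exact hp.not_dSepNodes hE (hsep _ h0 _ hv)

/-- Along a directed path that avoids the ancestors of `Z`, connectedness into the first node
propagates forwards. -/
theorem Connected.of_reaches {E : Finset (V × V)} {X Z : Finset V} {s : Bool} {v t : V}
    (h : Connected E X Z s v) (hvt : Reaches E v t)
    (hvZ : ∀ d ∈ Z, ¬ Reaches E v d) : ∃ s', Connected E X Z s' t := by
  induction hvt with
  | refl => exact ⟨s, h⟩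
  | @tail b c hvb hbc ih =>
    obtain ⟨s', hb⟩ := ih
    cases s' with
    | false => exact ⟨true, hb.out_child hbc⟩
    | true => exact ⟨true, hb.in_child (fun hbZ => hvZ b hbZ hvb) hbc⟩

/-- Along a directed path into `X` that avoids the ancestors of `Z`, connectedness propagates
backwards. -/
theorem connected_of_reaches_mem {E : Finset (V × V)} {X Z : Finset V} {v t : V} (ht : t ∈ X)
    (hvt : Reaches E v t) (hvZ : ∀ d ∈ Z, ¬ Reaches E v d) : Connected E X Z false v := by
  induction hvt using Relation.ReflTransGen.head_induction_on with
  | refl => exact Connected.start ht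
  | @head a c hac hct ih =>
    exact (ih fun d hd hcd => hvZ d hd (Relation.ReflTransGen.head hac hcd)).out_parent hac
      fun haZ => hvZ a haZ Relation.ReflTransGen.refl

/-- A connected ancestor of `X ∪ Y ∪ Z` is connected to all its parents outside `Z`. -/
theorem Connected.parent {E : Finset (V × V)} (hE : Acyclic E) {X Y Z : Finset V}
    (hXZ : Disjoint X Z) (hsep : DSep (Close E) X Y Z) {s : Bool} {v u t : V}
    (h : Connected E X Z s v) (ht : t ∈ X ∪ Y ∪ Z) (hvt : Reaches E v t) (huv : (u, v) ∈ E)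
    (hu : u ∉ Z) : Connected E X Z false u := by
  cases s with
  | false => exact h.out_parent huv hu
  | true =>
    by_cases hvZ : ∃ d ∈ Z, Reaches E v d
    · obtain ⟨d, hd, hvd⟩ := hvZ
      exact h.in_parent hvd hd huv hu
    · push Not at hvZ
      rw [Finset.mem_union, Finset.mem_union] at ht
      rcases ht with (ht | ht) | ht
      · exact (connected_of_reaches_mem ht hvt hvZ).out_parent huv hu
      · obtain ⟨s', h'⟩ := h.of_reaches hvt hvZ
        exact absurd ht (h'.not_mem_of_dSep hE hXZ hsep)
      · exact absurd hvt (hvZ t ht)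

theorem Connected.of_mem_InitSet {E : Finset (V × V)} {X Z : Finset V} {s : Bool} {v u : V}
    (h : Connected E X Z s v) (hv : v ∈ InitSet E) (hu : u ∈ InitSet E) :
    ∃ s', Connected E X Z s' u := by
  have key : ∀ {w : V}, Connected E X Z false w → w ∈ InitSet E → ∃ s', Connected E X Z s' u := by
    intro w hw hwI
    by_cases hwu : w = u
    · exact ⟨false, hwu ▸ hw⟩
    · exact ⟨true, hw.root hwI hu hwu⟩
  cases s with
  | false => exact key h hv
  | true =>
    cases h with
    | out_child _ h => exact absurd hv (not_mem_InitSet_of_edge h)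
    | in_child _ _ h => exact absurd hv (not_mem_InitSet_of_edge h)
    | root h hI _ _ => exact key h hI

/-! Marginalisation and factorisation of the chain rule -/

/-- The part of the chain-rule product that belongs to the nodes of `U`. -/
def partialBN (B : GBN V) (U : Finset V) (b : V → Bool) : ℝ :=
  B.ι (fun x => b x.1) * ∏ X ∈ U \ InitSet B.edges, copyProb B X (b X) b

theorem copyProb_nonneg (B : GBN V) (X : V) (v : Bool) (b : V → Bool) : 0 ≤ copyProb B X v b := by
  unfold copyProb
  split_ifs
  · exact B.cpt_nonneg _ _
  · exact sub_nonneg.2 (B.cpt_le_one _ _)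

theorem distBN_nonneg (B : GBN V) (b : V → Bool) : 0 ≤ distBN B b :=
  mul_nonneg (B.ι_dist.1 _) (Finset.prod_nonneg fun _ _ => copyProb_nonneg _ _ _ _)

/-- `f` depends only on the values of the nodes of `U`. -/
def DependsOnly {α : Type} (f : (V → Bool) → α) (U : Finset V) : Prop :=
  ∀ b b', (∀ x ∈ U, b x = b' x) → f b = f b'

theorem dependsOnly_copyProb (B : GBN V) (X : V) :
    DependsOnly (fun b => copyProb B X (b X) b) (insert X (Pre B.edges X)) := by
  intro b b' h
  have h1 : (fun p : {x // x ∈ Pre B.edges X} => b p.1) = fun p => b' p.1 :=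
    funext fun p => h _ (Finset.mem_insert_of_mem p.2)
  simp only [copyProb, h X (Finset.mem_insert_self _ _), h1]

theorem dependsOnly_ι (B : GBN V) :
    DependsOnly (fun b : V → Bool => B.ι (fun x => b x.1)) (InitSet B.edges) := by
  intro b b' h
  exact congrArg B.ι (funext fun p => h _ p.2)

theorem DependsOnly.mono {α : Type} {f : (V → Bool) → α} {U W : Finset V} (h : DependsOnly f U)
    (hUW : U ⊆ W) : DependsOnly f W := fun b b' hb => h b b' fun x hx => hb x (hUW hx)

theorem dependsOnly_agrees {U : Finset V} (d : Asg U) :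
    DependsOnly (fun f => Agrees f U d) U := by
  intro f f' h
  refine propext (forall_congr' fun x => ?_)
  rw [h _ x.2]

theorem DependsOnly.mul {f g : (V → Bool) → ℝ} {U : Finset V} (hf : DependsOnly f U)
    (hg : DependsOnly g U) : DependsOnly (fun b => f b * g b) U :=
  fun b b' hb => congrArg₂ (· * ·) (hf b b' hb) (hg b b' hb)

theorem DependsOnly.prod {f : V → (V → Bool) → ℝ} {U s : Finset V}
    (hf : ∀ x ∈ s, DependsOnly (f x) U) : DependsOnly (fun b => ∏ x ∈ s, f x b) U :=
  fun b b' hb => Finset.prod_congr rfl fun x hx => hf x hx b b' hb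

theorem sum_mul_copyProb (B : GBN V) {v : V} (hv : (v, v) ∉ B.edges) {h : (V → Bool) → ℝ}
    {U : Finset V} (hh : DependsOnly h U) (hvU : v ∉ U) :
    ∑ b, h b * copyProb B v (b v) b = 2⁻¹ * ∑ b, h b := by
  let flip : (V → Bool) → (V → Bool) := fun b => Function.update b v (!b v)
  have hflip : Function.Involutive flip := by
    intro b
    simp [flip]
  have hsum : ∑ b, h (flip b) * copyProb B v (flip b v) (flip b) =
      ∑ b, h b * copyProb B v (b v) b :=
    Equiv.sum_comp hflip.toPerm fun b => h b * copyProb B v (b v) b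
  have hterm : ∀ b, h (flip b) * copyProb B v (flip b v) (flip b) + h b * copyProb B v (b v) b
      = h b := by
    intro b
    have h1 : h (flip b) = h b := hh _ _ fun x hx =>
      Function.update_of_ne (ne_of_mem_of_not_mem hx hvU) _ _
    have h2 : (fun p : {x // x ∈ Pre B.edges v} => flip b p.1) = fun p => b p.1 :=
      funext fun p =>
        Function.update_of_ne (ne_of_mem_of_not_mem p.2 fun h => hv (mem_Pre.1 h)) _ _
    have h3 : flip b v = !b v := Function.update_self _ _ _
    rw [h1, h3]
    unfold copyProb
    rw [h2]
    cases b v <;> simp <;> ring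
  have := Finset.sum_congr rfl fun b (_ : b ∈ (Finset.univ : Finset (V → Bool))) => hterm b
  rw [Finset.sum_add_distrib, hsum] at this
  linarith

/-- Summing out the nodes outside an ancestral set. -/
theorem sum_mul_partialBN (B : GBN V) (hE : Acyclic B.edges) {A : Finset V}
    (hInit : InitSet B.edges ⊆ A) (hA : ∀ v ∈ A, Pre B.edges v ⊆ A) (m : ℕ) {U : Finset V}
    (hAU : A ⊆ U) (hU : ∀ v ∈ U, Pre B.edges v ⊆ U) (hm : (U \ A).card = m)
    {g : (V → Bool) → ℝ} (hg : DependsOnly g A) :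
    ∑ b, g b * partialBN B U b = 2⁻¹ ^ m * ∑ b, g b * partialBN B A b := by
  induction m generalizing U with
  | zero =>
    obtain rfl : A = U := hAU.antisymm (by simpa using hm)
    simp
  | succ m ih =>
    obtain ⟨v, hv, hsink⟩ := hE.exists_sink (↑(U \ A) : Set V)
      (Finset.coe_nonempty.2 (Finset.card_pos.1 (by omega)))
    rw [Finset.mem_coe, Finset.mem_sdiff] at hv
    have hnochild : ∀ w ∈ U, (v, w) ∉ B.edges := by
      intro w hw hvw
      by_cases hwA : w ∈ A
      · exact hv.2 (hA w hwA (mem_Pre.2 hvw))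
      · exact hsink w (by simp [hw, hwA]) hvw
    have hvI : v ∉ InitSet B.edges := fun h => hv.2 (hInit h)
    have hAU' : A ⊆ U.erase v := fun x hx =>
      Finset.mem_erase.2 ⟨fun hxv => hv.2 (hxv ▸ hx), hAU hx⟩
    have hU' : ∀ w ∈ U.erase v, Pre B.edges w ⊆ U.erase v := by
      intro w hw x hx
      have hwU := Finset.mem_of_mem_erase hw
      refine Finset.mem_erase.2 ⟨?_, hU w hwU hx⟩
      rintro rfl
      exact hnochild w hwU (mem_Pre.1 hx)
    have hcard : (U.erase v \ A).card = m := by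
      rw [Finset.erase_sdiff_comm, Finset.card_erase_of_mem (Finset.mem_sdiff.2 hv), hm]
      rfl
    have hpart : ∀ b, partialBN B U b = partialBN B (U.erase v) b * copyProb B v (b v) b := by
      intro b
      unfold partialBN
      rw [Finset.erase_sdiff_comm, mul_assoc, Finset.prod_erase_mul]
      exact Finset.mem_sdiff.2 ⟨hv.1, hvI⟩
    have hdep : DependsOnly (partialBN B (U.erase v)) (U.erase v) := by
      refine ((dependsOnly_ι B).mono (hInit.trans hAU')).mul (DependsOnly.prod fun x hx => ?_)
      have hx' := (Finset.mem_sdiff.1 hx).1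
      exact (dependsOnly_copyProb B x).mono (Finset.insert_subset hx' (hU' x hx'))
    have hsum := sum_mul_copyProb B (fun h => hE v (Relation.TransGen.single h))
      ((hg.mono hAU').mul hdep) (Finset.notMem_erase v U)
    simp only [hpart, ← mul_assoc, hsum, ih hAU' hU' hcard]
    ring

/-- If a weight factorises into a function of `S ∪ Z` and a function of the complement of `S`,
then events over `S` and events over the complement of `S` are independent given
an event that fixes the values of `Z`. -/
theorem probIf_mul_probIf_of_factor {F H : (V → Bool) → ℝ} {S Z : Finset V}
    (hF : DependsOnly F (S ∪ Z)) (hH : DependsOnly H Sᶜ) {p q r : (V → Bool) → Prop}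
    (hp : DependsOnly p S) (hq : DependsOnly q Sᶜ) (hr : DependsOnly r Sᶜ)
    (hrZ : ∀ f g, r f → r g → ∀ x ∈ Z, f x = g x) :
    probIf (fun f => F f * H f) (fun f => p f ∧ q f ∧ r f) *
        probIf (fun f => F f * H f) (fun f => r f) =
      probIf (fun f => F f * H f) (fun f => p f ∧ r f) *
        probIf (fun f => F f * H f) (fun f => q f ∧ r f) := by
  let mix : (V → Bool) → (V → Bool) → (V → Bool) := fun f g x => if x ∈ S then f x else g x
  let swap : (V → Bool) × (V → Bool) → (V → Bool) × (V → Bool) :=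
    fun t => (mix t.1 t.2, mix t.2 t.1)
  have hswap : Function.Involutive swap := by
    rintro ⟨f, g⟩
    refine Prod.ext (funext fun x => ?_) (funext fun x => ?_) <;>
      by_cases hx : x ∈ S <;> simp [swap, mix, hx]
  have hmix_left : ∀ {α : Type} {φ : (V → Bool) → α}, DependsOnly φ S →
      ∀ f g, φ (mix f g) = φ f := fun hφ f g => hφ _ _ fun x hx => by simp [mix, hx]
  have hmix_right : ∀ {α : Type} {φ : (V → Bool) → α}, DependsOnly φ Sᶜ →
      ∀ f g, φ (mix f g) = φ g := fun hφ f g =>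
    hφ _ _ fun x hx => by simp [mix, Finset.mem_compl.1 hx]
  have hmixF : ∀ f g, r f → r g → F (mix f g) = F f := by
    intro f g hf hg
    refine hF _ _ fun x hx => ?_
    by_cases hxS : x ∈ S
    · simp [mix, hxS]
    · have hxZ : x ∈ Z := (Finset.mem_union.1 hx).resolve_left hxS
      simp only [mix, hxS, if_false]
      exact hrZ g f hg hf x hxZ
  unfold probIf
  rw [Finset.sum_mul_sum, Finset.sum_mul_sum, ← Finset.sum_product', ← Finset.sum_product',
    Finset.univ_product_univ, ← Equiv.sum_comp hswap.toPerm]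
  refine Finset.sum_congr rfl fun t _ => ?_
  obtain ⟨f, g⟩ := t
  simp only [Function.Involutive.coe_toPerm, swap, hmix_left hp, hmix_right hq, hmix_right hr,
    hmix_right hH]
  by_cases hf : r f
  · by_cases hg : r g
    · rw [hmixF f g hf hg, hmixF g f hg hf]
      by_cases h1 : p f
      · by_cases h2 : q g
        · simp only [hf, hg, h1, h2, and_self, if_true]
          ring
        · simp [h2]
      · simp [h1]
    · simp [hg]
  · simp [hf]

/-- A weight of chain-rule form splits along a set `S` that, up to `Z`, contains or avoids each
family and the set of initial nodes. -/
theorem exists_factor_partialBN (B : GBN V) {A S Z : Finset V}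
    (hfam : ∀ v ∈ A, (∃ x ∈ insert v (Pre B.edges v), x ∈ S) →
      insert v (Pre B.edges v) ⊆ S ∪ Z)
    (hInit : (∃ x ∈ InitSet B.edges, x ∈ S) → InitSet B.edges ⊆ S ∪ Z) :
    ∃ F H : (V → Bool) → ℝ, DependsOnly F (S ∪ Z) ∧ DependsOnly H Sᶜ ∧
      ∀ b, partialBN B A b = F b * H b := by
  have hprod : ∃ F H : (V → Bool) → ℝ, DependsOnly F (S ∪ Z) ∧ DependsOnly H Sᶜ ∧
      ∀ b, ∏ X ∈ A \ InitSet B.edges, copyProb B X (b X) b = F b * H b := by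
    let meets : V → Prop := fun v => ∃ x ∈ insert v (Pre B.edges v), x ∈ S
    refine ⟨fun b => ∏ X ∈ (A \ InitSet B.edges).filter meets, copyProb B X (b X) b,
      fun b => ∏ X ∈ (A \ InitSet B.edges).filter fun v => ¬ meets v, copyProb B X (b X) b,
      DependsOnly.prod fun v hv => ?_, DependsOnly.prod fun v hv => ?_,
      fun b => (Finset.prod_filter_mul_prod_filter_not _ _ _).symm⟩
    · rw [Finset.mem_filter, Finset.mem_sdiff] at hv
      exact (dependsOnly_copyProb B v).mono (hfam v hv.1.1 hv.2)
    · rw [Finset.mem_filter] at hv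
      exact (dependsOnly_copyProb B v).mono fun x hx =>
        Finset.mem_compl.2 fun hxS => hv.2 ⟨x, hx, hxS⟩
  obtain ⟨F, H, hF, hH, hFH⟩ := hprod
  by_cases hI : ∃ x ∈ InitSet B.edges, x ∈ S
  · refine ⟨fun b => B.ι (fun x => b x.1) * F b, H,
      ((dependsOnly_ι B).mono (hInit hI)).mul hF, hH, fun b => ?_⟩
    rw [partialBN, hFH, mul_assoc]
  · refine ⟨F, fun b => B.ι (fun x => b x.1) * H b, hF,
      ((dependsOnly_ι B).mono fun x hx => Finset.mem_compl.2 fun hxS => hI ⟨x, hx, hxS⟩).mul hH,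
      fun b => ?_⟩
    rw [partialBN, hFH, mul_left_comm]

theorem probIf_mono {μ : (V → Bool) → ℝ} (hμ : ∀ b, 0 ≤ μ b) {p q : (V → Bool) → Prop}
    (hpq : ∀ b, p b → q b) : probIf μ p ≤ probIf μ q := by
  refine Finset.sum_le_sum fun b _ => ?_
  by_cases hp : p b
  · simp [hp, hpq b hp]
  · simp only [hp, if_false]
    split_ifs
    exacts [hμ b, le_rfl]

/-- Multiplicative form of the conditional independence implied by d-separation in the closure. -/
theorem probIf_mul_probIf_of_dSep (B : GBN V) (hE : Acyclic B.edges) {X Y Z : Finset V}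
    (hXZ : Disjoint X Z) (hsep : DSep (Close B.edges) X Y Z) (a : Asg X) (b : Asg Y) (c : Asg Z) :
    probIf (distBN B) (fun f => Agrees f X a ∧ Agrees f Y b ∧ Agrees f Z c) *
        probIf (distBN B) (fun f => Agrees f Z c) =
      probIf (distBN B) (fun f => Agrees f X a ∧ Agrees f Z c) *
        probIf (distBN B) (fun f => Agrees f Y b ∧ Agrees f Z c) := by
  let A : Finset V := Finset.univ.filter fun v =>
    v ∈ InitSet B.edges ∨ ∃ t ∈ X ∪ Y ∪ Z, Reaches B.edges v t
  let S : Finset V := Finset.univ.filter fun v =>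
    v ∉ Z ∧ ∃ s, Connected B.edges X Z s v
  have hS : ∀ {v}, v ∈ S ↔ v ∉ Z ∧ ∃ s, Connected B.edges X Z s v := by simp [S]
  have hAinit : InitSet B.edges ⊆ A := fun v hv => by simp [A, hv]
  have hAmem : ∀ t ∈ X ∪ Y ∪ Z, t ∈ A := fun t ht =>
    Finset.mem_filter.2 ⟨Finset.mem_univ _, Or.inr ⟨t, ht, Relation.ReflTransGen.refl⟩⟩
  have hAedge : ∀ {u v}, v ∈ A → (u, v) ∈ B.edges → ∃ t ∈ X ∪ Y ∪ Z, Reaches B.edges v t :=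
    fun hv huv => (Finset.mem_filter.1 hv).2.resolve_left (not_mem_InitSet_of_edge huv)
  have hApre : ∀ v ∈ A, Pre B.edges v ⊆ A := by
    intro v hv u hu
    obtain ⟨t, ht, hvt⟩ := hAedge hv (mem_Pre.1 hu)
    exact Finset.mem_filter.2 ⟨Finset.mem_univ _,
      Or.inr ⟨t, ht, Relation.ReflTransGen.head (mem_Pre.1 hu) hvt⟩⟩
  obtain ⟨F, H, hF, hH, hFH⟩ := exists_factor_partialBN B (A := A) (S := S) (Z := Z)
    (by
      rintro v hv ⟨x, hx, hxS⟩ y hy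
      obtain ⟨hxZ, s, hxs⟩ := hS.1 hxS
      rw [Finset.mem_union, or_iff_not_imp_right]
      intro hyZ
      have hvs : ∃ s, Connected B.edges X Z s v := by
        rcases Finset.mem_insert.1 hx with rfl | hx
        · exact ⟨s, hxs⟩
        · cases s with
          | false => exact ⟨true, hxs.out_child (mem_Pre.1 hx)⟩
          | true => exact ⟨true, hxs.in_child hxZ (mem_Pre.1 hx)⟩
      refine hS.2 ⟨hyZ, ?_⟩
      rcases Finset.mem_insert.1 hy with rfl | hy
      · exact hvs
      · obtain ⟨s', hvs'⟩ := hvs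
        obtain ⟨t, ht, hvt⟩ := hAedge hv (mem_Pre.1 hy)
        exact ⟨false, hvs'.parent hE hXZ hsep ht hvt (mem_Pre.1 hy) hyZ⟩)
    (by
      rintro ⟨x, hx, hxS⟩ y hy
      obtain ⟨-, s, hxs⟩ := hS.1 hxS
      rw [Finset.mem_union, or_iff_not_imp_right]
      exact fun hyZ => hS.2 ⟨hyZ, hxs.of_mem_InitSet hx hy⟩)
  have hprob : ∀ p : (V → Bool) → Prop, DependsOnly p (X ∪ Y ∪ Z) →
      probIf (distBN B) p = 2⁻¹ ^ (Finset.univ \ A).card * probIf (fun f => F f * H f) p := by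
    intro p hp
    have hg : DependsOnly (fun f => if p f then (1 : ℝ) else 0) A := by
      intro f f' hff
      simp only [hp f f' fun x hx => hff x (hAmem x hx)]
    have := sum_mul_partialBN B hE hAinit hApre _ (Finset.subset_univ A)
      (fun _ _ => Finset.subset_univ _) rfl hg
    simp only [ite_mul, one_mul, zero_mul, hFH] at this
    exact this
  have hand : ∀ {p q : (V → Bool) → Prop}, DependsOnly p (X ∪ Y ∪ Z) →
      DependsOnly q (X ∪ Y ∪ Z) → DependsOnly (fun f => p f ∧ q f) (X ∪ Y ∪ Z) :=
    fun hp hq f f' hff => congrArg₂ And (hp f f' hff) (hq f f' hff)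
  have hXd := (dependsOnly_agrees a).mono (W := X ∪ Y ∪ Z) fun x hx => by simp [hx]
  have hYd := (dependsOnly_agrees b).mono (W := X ∪ Y ∪ Z) fun x hx => by simp [hx]
  have hZd := (dependsOnly_agrees c).mono (W := X ∪ Y ∪ Z) fun x hx => by simp [hx]
  rw [hprob _ (hand hXd (hand hYd hZd)), hprob _ hZd, hprob _ (hand hXd hZd),
    hprob _ (hand hYd hZd)]
  have hXS : X ⊆ S := fun x hx =>
    hS.2 ⟨Finset.disjoint_left.1 hXZ hx, false, Connected.start hx⟩
  have hYS : Y ⊆ Sᶜ := fun y hy => Finset.mem_compl.2 fun hyS => by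
    obtain ⟨-, s, hys⟩ := hS.1 hyS
    exact hys.not_mem_of_dSep hE hXZ hsep hy
  have hZS : Z ⊆ Sᶜ := fun z hz => Finset.mem_compl.2 fun hzS => (hS.1 hzS).1 hz
  rw [mul_mul_mul_comm, probIf_mul_probIf_of_factor hF hH ((dependsOnly_agrees a).mono hXS)
    ((dependsOnly_agrees b).mono hYS) ((dependsOnly_agrees c).mono hZS)
    (fun f g hf hg x hx => (hf ⟨x, hx⟩).trans (hg ⟨x, hx⟩).symm), mul_mul_mul_comm]

/-- For an acyclic GBN `B`, every d-separation triple of the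
closure graph `Close(G)` is an independence of the standard BN semantics:
`d-sep(Close(G)) ⊆ Indep(dist_BN(B))`. -/
theorem stmt0 {V : Type} [Fintype V] [DecidableEq V]
    (B : GBN V) (hacyc : Acyclic B.edges) :
    DSepSet (Close B.edges) ⊆ IndepSet (distBN B) := by
  rintro ⟨X, Y, Z⟩ ⟨hdisj, hsep⟩
  refine ⟨hdisj, fun a b c => ?_⟩
  rw [or_iff_not_imp_left]
  intro hne
  have hne' : probIf (distBN B) (fun f => Agrees f Z c) ≠ 0 := by
    intro h0
    have hle : probIf (distBN B) (fun f => Agrees f Y b ∧ Agrees f Z c) ≤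
        probIf (distBN B) (fun f => Agrees f Z c) :=
      probIf_mono (distBN_nonneg B) fun f hf => hf.2
    have hge : 0 ≤ probIf (distBN B) (fun f => Agrees f Y b ∧ Agrees f Z c) :=
      Finset.sum_nonneg fun f _ => by
        split_ifs
        exacts [distBN_nonneg B f, le_rfl]
    exact hne (le_antisymm (h0 ▸ hle) hge)
  rw [div_eq_div_iff hne hne']
  exact probIf_mul_probIf_of_dSep B hacyc hdisj.2.1 hsep a b c

end GBNPaper
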